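/- Suppose ω(w) = 0, and suppose w has a prefix of weight η(d); let x be the shortest prefix of w with ω(x) ∈ {−η(d), η(d)} and assume ω(x) = η(d). Then w admits a factorization w = x₁ u x₂ w₁ y₂ v y₁ w₂ such that x = x₁ u x₂, the matrices φ(u) and φ(v) are stable, ω(u) > 0, ω(v) < 0, ω(w₁) = ω(w₂) = 0, and ω(y₂ v y₁) = −η(d). -/

import Mathlib

/-- A matrix `M` is *stable* if `rank M = rank M²`. -/
def MatStable {d : ℕ} (M : Matrix (Fin d) (Fin d) ℚ) : Prop :=
  M.rank = (M * M).rank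

/-- Threshold `η(d) = 2^(d(d+3)) + 1`. -/
def eta (d : ℕ) : ℤ := 2 ^ (d * (d + 3)) + 1

/-!
A long product of endomorphisms of a `d`-dimensional space has a stable infix. Induct on a bound `r`
for the ranks of the factors, and cut the product into blocks of `2 ^ d` factors. If every block has
rank less than `r`, the induction hypothesis applies to the list of blocks. Otherwise some block
`f₁ ⋯ fₙ` has rank `r`, hence so do all its nonempty infixes. Put `Aₖ = range (fₖ ⋯ fₙ)` and
`Bₖ = ker (f₁ ⋯ fₖ₋₁)`. Then `Aₖ ∩ Bₖ = 0`, while `Aᵢ ∩ Bₖ = 0` for some `i < k` would make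
`fᵢ ⋯ fₖ₋₁` stable. If this never happens, the skew version of Bollobás's theorem for subspaces
(Lovász) gives `n ≤ d.choose r < 2 ^ d`, a contradiction.

A word of large weight splits into many blocks of weight one, so it has a stable factor of positive
weight; apply this to `x` with weight `ω` and to the rest of `w` with weight `-ω`.
-/

open Module LinearMap

theorem choose_succ_lt_two_pow (d r : ℕ) : d.choose (r + 1) < 2 ^ d := by
  obtain rfl | hd := d.eq_zero_or_pos
  · simp
  · exact Nat.choose_lt_two_pow d (r + 1) hd

section SkewBollobas

variable {K V : Type*} [Field K] [AddCommGroup V] [Module K V]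

theorem linearIndependent_of_triangular {ι : Type*} [LinearOrder ι] {W : ι → Type*}
    [∀ i, AddCommGroup (W i)] [∀ i, Module K (W i)] {v : ι → V} (g : ∀ i, V →ₗ[K] W i)
    (hdiag : ∀ i, g i (v i) ≠ 0) (hlt : ∀ i j, i < j → g j (v i) = 0) :
    LinearIndependent K v := by
  refine linearIndependent_iff.2 fun c hc => by_contra fun hne => ?_
  let j := c.support.max' (Finsupp.support_nonempty_iff.2 hne)
  have hjc : j ∈ c.support := c.support.max'_mem _
  have hsum : ∑ i ∈ c.support, c i • g j (v i) = 0 := by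
    simpa [Finsupp.linearCombination_apply, Finsupp.sum] using congrArg (g j) hc
  rw [Finset.sum_eq_single_of_mem j hjc fun i hi hij => by
    rw [hlt i j ((c.support.le_max' i hi).lt_of_ne hij), smul_zero]] at hsum
  exact (smul_ne_zero (Finsupp.mem_support_iff.1 hjc) (hdiag j)) hsum

theorem ιMulti_ne_zero_iff_linearIndependent {r : ℕ} {v : Fin r → V} :
    exteriorPower.ιMulti K r v ≠ 0 ↔ LinearIndependent K v := by
  refine ⟨fun h => by_contra fun hv => h (AlternatingMap.map_linearDependent _ v hv), fun hv => ?_⟩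
  have h := (exteriorPower.ιMulti_family_linearIndependent_field (n := r) hv).ne_zero
    (Set.powersetCard.ofFinEmbEquiv (RelEmbedding.refl _))
  simpa [exteriorPower.ιMulti_family, Function.comp_def] using h

theorem exists_exteriorPower_map_ne_zero_iff_disjoint [FiniteDimensional K V] {r : ℕ}
    (A : Submodule K V) (hA : finrank K A = r) :
    ∃ e : ⋀[K]^r V, ∀ {W : Type*} [AddCommGroup W] [Module K W] (g : V →ₗ[K] W),
      exteriorPower.map r g e ≠ 0 ↔ Disjoint A (ker g) := by
  let b := finBasisOfFinrankEq K A hA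
  have hb : LinearIndependent K (A.subtype ∘ b) := b.linearIndependent.map' _ A.ker_subtype
  have hspan : Submodule.span K (Set.range (A.subtype ∘ b)) = A := by
    rw [Set.range_comp, ← Submodule.map_span, b.span_eq, Submodule.map_subtype_top]
  refine ⟨exteriorPower.ιMulti K r (A.subtype ∘ b), fun g => ?_⟩
  rw [exteriorPower.map_apply_ιMulti, ιMulti_ne_zero_iff_linearIndependent]
  refine ⟨fun h => hspan ▸ Submodule.range_ker_disjoint h, fun h => ?_⟩
  exact (g.linearIndependent_iff_of_disjoint (hspan.symm ▸ h)).2 hb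

theorem card_le_choose_of_skew_disjoint [FiniteDimensional K V] {ι : Type*} [LinearOrder ι]
    [Fintype ι] {r : ℕ} (A B : ι → Submodule K V) (hA : ∀ i, finrank K (A i) = r)
    (hdiag : ∀ i, Disjoint (A i) (B i)) (hlt : ∀ i j, i < j → ¬Disjoint (A i) (B j)) :
    Fintype.card ι ≤ (finrank K V).choose r := by
  choose e he using fun i => exists_exteriorPower_map_ne_zero_iff_disjoint (A i) (hA i)
  have hmkQ (i j : ι) : exteriorPower.map r (B j).mkQ (e i) ≠ 0 ↔ Disjoint (A i) (B j) := by
    rw [he, Submodule.ker_mkQ]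
  rw [← exteriorPower.finrank_eq K r]
  refine (linearIndependent_of_triangular (fun j => exteriorPower.map r (B j).mkQ)
    (fun i => (hmkQ i i).2 (hdiag i)) fun i j hij => ?_).fintype_card_le_finrank
  exact not_not.1 (mt (hmkQ i j).1 (hlt i j hij))

end SkewBollobas

section Words

variable {α : Type*} {ω : List α → ℤ}

theorem exists_take_eq_append_and_drop_eq_append {l : List α} {i j : ℕ} (hij : i < j)
    (hj : j ≤ l.length) :
    ∃ m, m ≠ [] ∧ l.take j = l.take i ++ m ∧ l.drop i = m ++ l.drop j := by
  refine ⟨(l.take j).drop i, ?_, ?_, ?_⟩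
  · rw [ne_eq, List.drop_eq_nil_iff, List.length_take_of_le hj]
    exact hij.not_ge
  · conv_lhs => rw [← List.take_append_drop i (l.take j), List.take_take, min_eq_left hij.le]
  · rw [← List.drop_append_of_le_length (by rw [List.length_take_of_le hj]; exact hij.le),
      List.take_append_drop]

theorem exists_prefix_weight_eq (hω_nil : ω [] = 0) (hω_app : ∀ u v, ω (u ++ v) = ω u + ω v)
    (hω_letter : ∀ σ, ω [σ] ≤ 1) {m : ℤ} (hm : 0 ≤ m) (x : List α) (hx : m ≤ ω x) :
    ∃ p, p <+: x ∧ ω p = m := by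
  induction x using List.reverseRecOn with
  | nil => exact ⟨[], List.nil_prefix, by omega⟩
  | append_singleton x σ ih =>
    by_cases hmx : m ≤ ω x
    · obtain ⟨p, hp, hpm⟩ := ih hmx
      exact ⟨p, hp.trans (List.prefix_append _ _), hpm⟩
    · have hσ := hω_letter σ
      refine ⟨x ++ [σ], List.prefix_rfl, ?_⟩
      rw [hω_app] at hx ⊢
      omega

theorem exists_blocks_weight_eq (hω_nil : ω [] = 0) (hω_app : ∀ u v, ω (u ++ v) = ω u + ω v)
    (hω_letter : ∀ σ, ω [σ] ≤ 1) {m : ℤ} (hm : 0 ≤ m) (N : ℕ) (x : List α) (hx : N * m ≤ ω x) :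
    ∃ L : List (List α), L.length = N ∧ (∀ b ∈ L, ω b = m) ∧ L.flatten <+: x := by
  induction N generalizing x with
  | zero => exact ⟨[], rfl, by simp, List.nil_prefix⟩
  | succ N ih =>
    rw [Nat.cast_succ, add_one_mul] at hx
    have hNm : 0 ≤ N * m := by positivity
    obtain ⟨b, ⟨y, rfl⟩, hb⟩ :=
      exists_prefix_weight_eq hω_nil hω_app hω_letter hm x (by omega)
    rw [hω_app] at hx
    obtain ⟨L, hL, hLm, hLy⟩ := ih y (by omega)
    exact ⟨b :: L, by simp [hL], by simpa [hb] using hLm,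
      by simpa [List.prefix_append_right_inj] using hLy⟩

@[to_additive]
theorem map_flatten_eq_prod {M : Type*} [Monoid M] {φ : List α → M} (hφ_nil : φ [] = 1)
    (hφ_app : ∀ u v, φ (u ++ v) = φ u * φ v) (L : List (List α)) :
    φ L.flatten = (L.map φ).prod := by
  induction L with
  | nil => simpa using hφ_nil
  | cons b L ih => simp [hφ_app, ih]

end Words

section Stable

variable {K V : Type*} [Field K] [AddCommGroup V] [Module K V]

/-- Stability of an endomorphism: its range meets its kernel trivially. In finite dimension this is
the rank condition `rank f = rank (f * f)`; see `isStable_toLin'_iff` for matrices. -/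
def IsStable (f : Module.End K V) : Prop :=
  Disjoint (range f) (ker f)

theorem finrank_map_eq_iff_disjoint_ker {W : Type*} [AddCommGroup W] [Module K W]
    (A : Submodule K V) [FiniteDimensional K A] (g : V →ₗ[K] W) :
    finrank K (A.map g) = finrank K A ↔ Disjoint A (ker g) := by
  refine ⟨fun h => Submodule.disjoint_ker_of_finrank_le g h.ge, fun h => ?_⟩
  rw [← LinearMap.range_domRestrict, finrank_range_of_inj (injective_domRestrict_iff.2 h)]

theorem isStable_toLin'_iff {n : Type*} [Fintype n] [DecidableEq n] (M : Matrix n n K) :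
    IsStable (Matrix.toLin' M) ↔ M.rank = (M * M).rank := by
  rw [IsStable, ← finrank_map_eq_iff_disjoint_ker, ← LinearMap.range_comp, ← Matrix.toLin'_mul,
    eq_comm]
  rfl

variable [FiniteDimensional K V]

theorem finrank_range_prod_le_of_infix {l m : List (Module.End K V)} (h : m <:+: l) :
    finrank K (range l.prod) ≤ finrank K (range m.prod) := by
  obtain ⟨s, t, rfl⟩ := h
  rw [List.prod_append, List.prod_append, mul_assoc, Module.End.mul_eq_comp, LinearMap.range_comp]
  exact (Submodule.finrank_map_le _ _).trans
    (Submodule.finrank_mono (LinearMap.range_comp_le_range _ _))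

theorem isStable_of_disjoint_range_mul_ker_mul {a p b : Module.End K V}
    (hrank : finrank K (range (p * b)) = finrank K (range p))
    (hdisj : Disjoint (range (p * b)) (ker (a * p))) : IsStable p := by
  have hrange : range (p * b) = range p :=
    Submodule.eq_of_le_of_finrank_eq (LinearMap.range_comp_le_range b p) hrank
  exact hdisj.mono hrange.ge (LinearMap.ker_le_ker_comp p a)

theorem exists_isStable_infix_of_choose_lt_length {r : ℕ} {l : List (Module.End K V)}
    (hle : ∀ f ∈ l, finrank K (range f) ≤ r) (hprod : r ≤ finrank K (range l.prod))
    (hlen : (finrank K V).choose r < l.length) :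
    ∃ m, m <:+: l ∧ m ≠ [] ∧ IsStable m.prod := by
  have hrank {m : List (Module.End K V)} (hm : m <:+: l) (hne : m ≠ []) :
      finrank K (range m.prod) = r := by
    obtain ⟨f, hf⟩ := List.exists_mem_of_ne_nil m hne
    have hmf := finrank_range_prod_le_of_infix ((List.singleton_infix_iff f m).2 hf)
    rw [List.prod_singleton] at hmf
    exact le_antisymm (hmf.trans (hle f (hm.subset hf)))
      (hprod.trans (finrank_range_prod_le_of_infix hm))
  have hdrop (i : Fin l.length) : finrank K (range (l.drop i).prod) = r :=
    hrank (List.drop_suffix _ _).isInfix (by simp)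
  by_contra! hns
  refine hlen.not_ge ?_
  rw [← Fintype.card_fin l.length]
  refine card_le_choose_of_skew_disjoint (fun i : Fin l.length => range (l.drop i).prod)
    (fun i => ker (l.take i).prod) hdrop (fun i => ?_) fun i j hij hdisj => ?_
  · rw [← finrank_map_eq_iff_disjoint_ker, ← LinearMap.range_comp, ← Module.End.mul_eq_comp,
      List.prod_take_mul_prod_drop, hdrop]
    exact hrank List.infix_rfl (List.ne_nil_of_length_pos i.pos)
  · obtain ⟨m, hne, htake, hdrop_eq⟩ := exists_take_eq_append_and_drop_eq_append hij j.isLt.le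
    have hm_suffix : m <:+ l.take j := ⟨l.take i, htake.symm⟩
    have hm : m <:+: l := hm_suffix.isInfix.trans (List.take_prefix _ _).isInfix
    rw [htake, hdrop_eq, List.prod_append, List.prod_append] at hdisj
    refine hns m hm hne (isStable_of_disjoint_range_mul_ker_mul ?_ hdisj)
    rw [← List.prod_append, ← hdrop_eq, hdrop, hrank hm hne]

theorem exists_isStable_infix_of_finrank_range_le (r : ℕ) (l : List (Module.End K V))
    (hle : ∀ f ∈ l, finrank K (range f) ≤ r) (hlen : 2 ^ (finrank K V * r) ≤ l.length) :
    ∃ m, m <:+: l ∧ m ≠ [] ∧ IsStable m.prod := by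
  induction r generalizing l with
  | zero =>
    obtain ⟨f, hf⟩ := List.exists_mem_of_length_pos (Nat.one_le_two_pow.trans hlen)
    have hf0 : f = 0 :=
      range_eq_bot.1 (Submodule.finrank_eq_zero.1 (Nat.le_zero.1 (hle f hf)))
    exact ⟨[f], (List.singleton_infix_iff f l).2 hf, by simp, by simp [IsStable, hf0]⟩
  | succ r ih =>
    obtain ⟨L, hL, hLlen, hLl⟩ := exists_blocks_weight_eq (ω := fun l => (l.length : ℤ))
      (m := 2 ^ finrank K V) (by simp) (by simp) (by simp) (by positivity)
      (2 ^ (finrank K V * r)) l (by rw [mul_add_one, pow_add] at hlen; exact_mod_cast hlen)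
    replace hLlen (b) (hb : b ∈ L) : b.length = 2 ^ finrank K V := mod_cast hLlen b hb
    by_cases hLr : ∀ b ∈ L, finrank K (range b.prod) ≤ r
    · obtain ⟨m, hm, hne, hst⟩ := ih (L.map List.prod) (by simpa using hLr) (by simp [hL])
      obtain ⟨L', hL', rfl⟩ := List.infix_map_iff.1 hm
      refine ⟨L'.flatten, hL'.flatten.trans hLl.isInfix, ?_, by rwa [List.prod_flatten]⟩
      obtain ⟨b, hb⟩ := List.exists_mem_of_ne_nil L' (by simpa using hne)
      have hb0 : b ≠ [] :=
        List.ne_nil_of_length_pos (by rw [hLlen b (hL'.subset hb)]; positivity)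
      exact fun h => hb0 (List.flatten_eq_nil_iff.1 h b hb)
    · push Not at hLr
      obtain ⟨b, hb, hbr⟩ := hLr
      have hbl : b <:+: l := (List.infix_of_mem_flatten hb).trans hLl.isInfix
      obtain ⟨m, hm, hst⟩ := exists_isStable_infix_of_choose_lt_length
        (fun f hf => hle f (hbl.subset hf)) hbr (by
          rw [hLlen b hb]
          exact choose_succ_lt_two_pow _ _)
      exact ⟨m, hm.trans hbl, hst⟩

theorem exists_isStable_factor_of_weight {α : Type*} {φ : List α → Module.End K V}
    (hφ_nil : φ [] = 1) (hφ_app : ∀ u v, φ (u ++ v) = φ u * φ v) {ω : List α → ℤ}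
    (hω_nil : ω [] = 0) (hω_app : ∀ u v, ω (u ++ v) = ω u + ω v) (hω_letter : ∀ σ, ω [σ] ≤ 1)
    (x : List α) (hx : 2 ^ (finrank K V ^ 2) ≤ ω x) :
    ∃ x₁ u x₂, x = x₁ ++ u ++ x₂ ∧ IsStable (φ u) ∧ 0 < ω u := by
  obtain ⟨L, hL, hLω, hLx⟩ := exists_blocks_weight_eq hω_nil hω_app hω_letter zero_le_one
    (2 ^ (finrank K V ^ 2)) x (by simpa using hx)
  obtain ⟨m, hm, hne, hst⟩ := exists_isStable_infix_of_finrank_range_le (finrank K V) (L.map φ)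
    (fun f _ => f.range.finrank_le) (by rw [List.length_map, hL, sq])
  obtain ⟨L', hL', rfl⟩ := List.infix_map_iff.1 hm
  obtain ⟨x₁, x₂, hx⟩ := hL'.flatten.trans hLx.isInfix
  refine ⟨x₁, L'.flatten, x₂, hx.symm, by rwa [map_flatten_eq_prod hφ_nil hφ_app], ?_⟩
  rw [map_flatten_eq_sum hω_nil hω_app, List.map_congr_left fun b hb => hLω b (hL'.subset hb)]
  simp only [List.map_const', List.sum_replicate, nsmul_one]
  exact mod_cast List.length_pos_of_ne_nil (by simpa using hne)

end Stable

theorem zero_weight_decomposition_general {α K n : Type*} [Field K] [Fintype n] [DecidableEq n]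
    (φ : List α → Matrix n n K)
    (hφ_nil : φ [] = 1) (hφ_app : ∀ u v : List α, φ (u ++ v) = φ u * φ v)
    (ω : List α → ℤ)
    (hω_nil : ω [] = 0) (hω_app : ∀ u v : List α, ω (u ++ v) = ω u + ω v)
    (hω_letter : ∀ σ : α, ω [σ] = -1 ∨ ω [σ] = 0 ∨ ω [σ] = 1)
    (w x : List α) (hw : ω w = 0) (hx_pre : x <+: w)
    (hx_weight : 2 ^ (Fintype.card n ^ 2) ≤ ω x) :
    ∃ x₁ u x₂ y₂ v y₁ : List α,
      w = x₁ ++ u ++ x₂ ++ y₂ ++ v ++ y₁ ∧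
      x = x₁ ++ u ++ x₂ ∧
      (φ u).rank = (φ u * φ u).rank ∧ (φ v).rank = (φ v * φ v).rank ∧
      0 < ω u ∧ ω v < 0 ∧
      ω (y₂ ++ v ++ y₁) = -ω x := by
  obtain ⟨y, rfl⟩ := hx_pre
  have hy : ω y = -ω x := by rw [hω_app] at hw; omega
  simp only [← isStable_toLin'_iff]
  let ψ (u : List α) : Module.End K (n → K) := Matrix.toLin' (φ u)
  have hψ_nil : ψ [] = 1 := by simp only [ψ, hφ_nil, Matrix.toLin'_one, Module.End.one_eq_id]
  have hψ_app (u v : List α) : ψ (u ++ v) = ψ u * ψ v := by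
    simp only [ψ, hφ_app, Matrix.toLin'_mul, Module.End.mul_eq_comp]
  rw [← Module.finrank_fintype_fun_eq_card K] at hx_weight
  obtain ⟨x₁, u, x₂, rfl, hu, hωu⟩ := exists_isStable_factor_of_weight hψ_nil hψ_app hω_nil hω_app
    (fun σ => by have := hω_letter σ; omega) x hx_weight
  obtain ⟨y₂, v, y₁, rfl, hv, hωv⟩ := exists_isStable_factor_of_weight hψ_nil hψ_app
    (ω := fun l => -ω l) (by simpa using hω_nil) (fun u v => by rw [hω_app, neg_add])
    (fun σ => by have := hω_letter σ; omega) y (by rwa [hy, neg_neg])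
  exact ⟨x₁, u, x₂, y₂, v, y₁, by simp, rfl, hu, hv, hωu, neg_pos.1 hωv, hy⟩

theorem two_pow_sq_le_eta (d : ℕ) : 2 ^ (d ^ 2) ≤ eta d := by
  have hpow : (2 : ℤ) ^ (d ^ 2) ≤ 2 ^ (d * (d + 3)) := pow_le_pow_right₀ one_le_two (by nlinarith)
  rw [eta]
  omega

/-- Suppose `ω(w) = 0` and `x` is the shortest prefix of `w` with
`ω(x) ∈ {-η(d), η(d)}`, and assume `ω(x) = η(d)`.  Then `w` factors as
`w = x₁ u x₂ w₁ y₂ v y₁ w₂` with `x = x₁ u x₂`, `φ(u)` and `φ(v)` stable,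
`ω(u) > 0`, `ω(v) < 0`, `ω(w₁) = ω(w₂) = 0`, and `ω(y₂ v y₁) = -η(d)`. -/
theorem zero_weight_decomposition {α : Type*} [Fintype α] (d : ℕ)
    (φ : List α → Matrix (Fin d) (Fin d) ℚ)
    (hφ_nil : φ [] = 1) (hφ_app : ∀ u v : List α, φ (u ++ v) = φ u * φ v)
    (ω : List α → ℤ)
    (hω_nil : ω [] = 0) (hω_app : ∀ u v : List α, ω (u ++ v) = ω u + ω v)
    (hω_letter : ∀ σ : α, ω [σ] = -1 ∨ ω [σ] = 0 ∨ ω [σ] = 1)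
    (w x : List α)
    (hw : ω w = 0)
    (hx_pre : x <+: w)
    (hx_val : ω x = eta d)
    (hx_min : ∀ p : List α, p <+: w → (ω p = eta d ∨ ω p = -eta d) →
        x.length ≤ p.length) :
    ∃ x₁ u x₂ w₁ y₂ v y₁ w₂ : List α,
      w = x₁ ++ u ++ x₂ ++ w₁ ++ y₂ ++ v ++ y₁ ++ w₂ ∧
      x = x₁ ++ u ++ x₂ ∧
      MatStable (φ u) ∧ MatStable (φ v) ∧
      0 < ω u ∧ ω v < 0 ∧
      ω w₁ = 0 ∧ ω w₂ = 0 ∧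
      ω (y₂ ++ v ++ y₁) = -eta d := by
  obtain ⟨x₁, u, x₂, y₂, v, y₁, h, hx, hrest⟩ := zero_weight_decomposition_general φ hφ_nil hφ_app ω
    hω_nil hω_app hω_letter w x hw hx_pre (by simpa [hx_val] using two_pow_sq_le_eta d)
  exact ⟨x₁, u, x₂, [], y₂, v, y₁, [], by simpa using h, hx,
    by simpa [MatStable, hω_nil, hx_val] using hrest⟩
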